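/- arXiv:2105.10677 — 2 statements merged into one kernel-verified Lean document; each statement's English description precedes it below -/
import Mathlib

section
/- Every regular domain is a hybrid* domain: if D is a regular domain of preferences over A, then there exist thresholds 1 ≤ p < q ≤ m such that D is a (p, q)-hybrid* domain. -/
open Finset

noncomputable section

/-- A preference is a linear order over the `m` alternatives, represented as a bijection
from rank positions (0-based: position `0` is the top) to alternatives. -/
abbrev Pref (m : ℕ) := Fin m ≃ Fin m

namespace PFBRPaper

variable {m n : ℕ}

/-- `a` is strictly preferred to `b` under `P`. -/
def Prefers (P : Pref m) (a b : Fin m) : Prop := P.symm a < P.symm b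

/-- The last alternative `a_m` (0-based index `m-1`). -/
def lastAlt (m : ℕ) [NeZero m] : Fin m :=
  ⟨m - 1, Nat.sub_lt (Nat.pos_of_ne_zero (NeZero.ne m)) Nat.one_pos⟩

/-- Every alternative is top-ranked by some preference in the domain. -/
def MinimallyRich [NeZero m] (D : Set (Pref m)) : Prop :=
  ∀ a : Fin m, ∃ P ∈ D, P 0 = a

/-- The preference ranking `a_m` first, ..., `a_1` last. -/
def revPref (m : ℕ) : Pref m :=
  ⟨Fin.rev, Fin.rev, fun i => Fin.rev_rev i, fun i => Fin.rev_rev i⟩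

/-- Diversity, with the labeling convention: the domain contains the preference ranking
`a_1` first, `a_2` second, ..., `a_m` last (the identity), together with its
complete reversal. -/
def Diversity (D : Set (Pref m)) : Prop :=
  Equiv.refl (Fin m) ∈ D ∧ revPref m ∈ D

/-- Two preferences are adjacent: the alternatives at two contiguous rank positions are
swapped and everything else is unchanged. -/
def Adjacent (P P' : Pref m) : Prop :=
  P ≠ P' ∧ ∃ k : ℕ, ∃ hk : k + 1 < m,
    P ⟨k, Nat.lt_of_succ_lt hk⟩ = P' ⟨k + 1, hk⟩ ∧
    P ⟨k + 1, hk⟩ = P' ⟨k, Nat.lt_of_succ_lt hk⟩ ∧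
    ∀ l : Fin m, (l : ℕ) ≠ k → (l : ℕ) ≠ k + 1 → P l = P' l

/-- `π 0, …, π (v-1)` is a path in `D` connecting `P` and `P'`. -/
def IsPath (D : Set (Pref m)) (P P' : Pref m) (π : ℕ → Pref m) (v : ℕ) : Prop :=
  1 ≤ v ∧ (∀ i < v, π i ∈ D) ∧
  (∀ i < v, ∀ j < v, π i = π j → i = j) ∧
  π 0 = P ∧ π (v - 1) = P' ∧
  ∀ i, i + 1 < v → Adjacent (π i) (π (i + 1))

/-- The path `π 0, …, π (v-1)` has no `{a,b}`-restoration: the relative ranking of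
`a` and `b` switches at most once along the path. -/
def NoRestoration (π : ℕ → Pref m) (v : ℕ) (a b : Fin m) : Prop :=
  ∀ i j k : ℕ, i < j → j < k → k < v →
    ¬(Prefers (π i) a b ∧ Prefers (π j) b a ∧ Prefers (π k) a b) ∧
    ¬(Prefers (π i) b a ∧ Prefers (π j) a b ∧ Prefers (π k) b a)

def NoRestorationDomain (D : Set (Pref m)) : Prop :=
  ∀ P ∈ D, ∀ P' ∈ D, P ≠ P' → ∀ a b : Fin m,
    ∃ π v, IsPath D P P' π v ∧ NoRestoration π v a b

def RegularDomain [NeZero m] (D : Set (Pref m)) : Prop :=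
  MinimallyRich D ∧ Diversity D ∧ NoRestorationDomain D

/-- `a ≈ b`: the two alternatives are strongly connected in the domain `D`. -/
def StronglyConnected [NeZero m] (D : Set (Pref m)) (a b : Fin m) : Prop :=
  a ≠ b ∧ ∃ P ∈ D, ∃ P' ∈ D,
    P 0 = a ∧ P 1 = b ∧ P' 0 = b ∧ P' 1 = a ∧
    ∀ k : Fin m, 2 ≤ (k : ℕ) → P k = P' k

/-- `l` is a vertex-path of the graph `G_≈^B(D)`. -/
def IsVertexPathOn [NeZero m] (D : Set (Pref m)) (B : Set (Fin m)) (l : List (Fin m)) : Prop :=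
  l ≠ [] ∧ l.Nodup ∧ (∀ x ∈ l, x ∈ B) ∧ l.Chain' (StronglyConnected D)

/-- `l` is a vertex-path of `G_≈^B(D)` connecting `a` and `b`. -/
def VertexPathBetween [NeZero m] (D : Set (Pref m)) (B : Set (Fin m)) (a b : Fin m)
    (l : List (Fin m)) : Prop :=
  IsVertexPathOn D B l ∧ l.head? = some a ∧ l.getLast? = some b

/-- `a` is a leaf of the subgraph `G_≈^B(D)`. -/
def IsLeaf [NeZero m] (D : Set (Pref m)) (B : Set (Fin m)) (a : Fin m) : Prop :=
  a ∈ B ∧ ∃! b : Fin m, b ∈ B ∧ StronglyConnected D a b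

/-- Single-peakedness w.r.t. the natural order. -/
def SinglePeaked [NeZero m] (P : Pref m) : Prop :=
  ∀ a b : Fin m, ((a < b ∧ b < P 0) ∨ (P 0 < b ∧ b < a)) → Prefers P b a

/-- A `(p,q)`-hybrid preference (thresholds `p < q`, 0-based). -/
def IsHybridPref [NeZero m] (p q : Fin m) (P : Pref m) : Prop :=
  (∀ r s : Fin m, ((r ≤ p ∧ s ≤ p) ∨ (q ≤ r ∧ q ≤ s)) →
      ((r < s ∧ s < P 0) ∨ (P 0 < s ∧ s < r)) → Prefers P s r) ∧
  (P 0 ≤ p → ∀ l : Fin m, p ≤ l → l ≤ q → l ≠ p → Prefers P p l) ∧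
  (q ≤ P 0 → ∀ l : Fin m, p ≤ l → l ≤ q → l ≠ q → Prefers P q l)

/-- The `(p,q)`-hybrid domain of all `(p,q)`-hybrid preferences. -/
def hybridDomain [NeZero m] (p q : Fin m) : Set (Pref m) := {P | IsHybridPref p q P}

/-- `D` is a `(p,q)`-hybrid* domain. -/
def IsHybridStar [NeZero m] (D : Set (Pref m)) (p q : Fin m) : Prop :=
  D ⊆ hybridDomain p q ∧
  (∀ k : Fin m, k ≠ 0 → k ≠ lastAlt m →
      ∃ l, VertexPathBetween D Set.univ 0 (lastAlt m) l ∧ k ∈ l) ∧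
  ((p : ℕ) + 1 < (q : ℕ) → ∀ a : Fin m, ¬ IsLeaf D (Set.Icc p q) a)

/-- A lottery over the alternatives. -/
def Lottery (m : ℕ) : Type :=
  {f : Fin m → ℝ // (∀ a, 0 ≤ f a) ∧ ∑ a, f a = 1}

/-- The probability that a lottery assigns to a set of alternatives. -/
def Lottery.prob (lam : Lottery m) (B : Finset (Fin m)) : ℝ := ∑ a ∈ B, lam.1 a

/-- The support of a lottery. -/
def Lottery.supp (lam : Lottery m) : Finset (Fin m) :=
  Finset.univ.filter (fun a => 0 < lam.1 a)

/-- The degenerate lottery on `a`. -/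
def degLottery (a : Fin m) : Lottery m :=
  ⟨fun b => if b = a then 1 else 0,
   fun b => by by_cases h : b = a <;> simp [h],
   by simp⟩

/-- A profile of preferences drawn from the domain `D`. -/
abbrev Profile (D : Set (Pref m)) (n : ℕ) := Fin n → D

/-- The top-ranked alternative of a preference in the domain. -/
def topOf [NeZero m] {D : Set (Pref m)} (P : D) : Fin m := P.1 0

def Unanimous [NeZero m] {D : Set (Pref m)} (φ : Profile D n → Lottery m) : Prop :=
  ∀ (P : Profile D n) (a : Fin m), (∀ i, topOf (P i) = a) → φ P = degLottery a

/-- The total probability of the `k` top-ranked alternatives of `P` under `lam`. -/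
def topSum (lam : Lottery m) (P : Pref m) (k : ℕ) : ℝ :=
  ∑ t ∈ Finset.univ.filter (fun t : Fin m => (t : ℕ) < k), lam.1 (P t)

/-- Strategy-proofness: truth-telling first-order stochastically dominates any unilateral
misrepresentation. -/
def StrategyProof {D : Set (Pref m)} (φ : Profile D n → Lottery m) : Prop :=
  ∀ (i : Fin n) (P : Profile D n) (Pi' : D) (k : ℕ), k ≤ m →
    topSum (φ (Function.update P i Pi')) (P i).1 k ≤ topSum (φ P) (P i).1 k

def TopsOnly [NeZero m] {D : Set (Pref m)} (φ : Profile D n → Lottery m) : Prop :=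
  ∀ P P' : Profile D n, (∀ i, topOf (P i) = topOf (P' i)) → φ P = φ P'

def Anonymous {D : Set (Pref m)} (φ : Profile D n → Lottery m) : Prop :=
  ∀ (P : Profile D n) (σ : Equiv.Perm (Fin n)), φ (P ∘ σ) = φ P

/-- The interval `[a_k, a_m]`. -/
def upSet (k : Fin m) : Finset (Fin m) := Finset.univ.filter (fun a => k ≤ a)

/-- The interval `[a_1, a_k]`. -/
def downSet (k : Fin m) : Finset (Fin m) := Finset.univ.filter (fun a => a ≤ k)

/-- The interval `[a_p, a_q]`. -/
def midSet (p q : Fin m) : Finset (Fin m) := Finset.univ.filter (fun a => p ≤ a ∧ a ≤ q)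

/-- `S(k,P)`: the voters whose preference top is not to the left of `a_k`. -/
def voterSet [NeZero m] {D : Set (Pref m)} (P : Profile D n) (k : Fin m) : Finset (Fin n) :=
  Finset.univ.filter (fun i => k ≤ topOf (P i))

/-- `β_{S(k,P)}([a_k, a_m])`, with the convention that it is `0` for `k = m`. -/
def tailProb [NeZero m] {D : Set (Pref m)} (β : Finset (Fin n) → Lottery m)
    (P : Profile D n) (k : ℕ) : ℝ :=
  if h : k < m then (β (voterSet P ⟨k, h⟩)).prob (upSet ⟨k, h⟩) else 0

def BallotUnanimity [NeZero m] (β : Finset (Fin n) → Lottery m) : Prop :=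
  β Finset.univ = degLottery (lastAlt m) ∧ β ∅ = degLottery 0

def BallotMonotone (β : Finset (Fin n) → Lottery m) : Prop :=
  ∀ S T : Finset (Fin n), S ⊂ T →
    ∀ k : Fin m, (β S).prob (upSet k) ≤ (β T).prob (upSet k)

/-- `φ` is a probabilistic fixed ballot rule with probabilistic ballots `β`. -/
def IsPFBRWith [NeZero m] {D : Set (Pref m)} (φ : Profile D n → Lottery m)
    (β : Finset (Fin n) → Lottery m) : Prop :=
  BallotUnanimity β ∧ BallotMonotone β ∧
  ∀ (P : Profile D n) (k : Fin m),
    (φ P).1 k = tailProb β P (k : ℕ) - tailProb β P ((k : ℕ) + 1)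

def IsPFBR [NeZero m] {D : Set (Pref m)} (φ : Profile D n → Lottery m) : Prop :=
  ∃ β, IsPFBRWith φ β

/-- The constrained random-dictatorship condition w.r.t. `a_p` and `a_q`. -/
def ConstrainedRD (p q : Fin m) (β : Finset (Fin n) → Lottery m) : Prop :=
  ∃ ε : Fin n → ℝ, (∀ i, 0 ≤ ε i) ∧ ∑ i, ε i = 1 ∧
    ∀ S : Finset (Fin n),
      (β S).prob (upSet q) = ∑ i ∈ S, ε i ∧
      (β S).prob (downSet p) = ∑ i ∈ Sᶜ, ε i

/-- The constrained random-dictatorship condition w.r.t. `a_p` and `a_q` with every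
conditional dictatorial coefficient equal to `1/n`. -/
def ConstrainedRDUniform (p q : Fin m) (β : Finset (Fin n) → Lottery m) : Prop :=
  ∀ S : Finset (Fin n),
    (β S).prob (upSet q) = (S.card : ℝ) / (n : ℝ) ∧
    (β S).prob (downSet p) = ((Sᶜ : Finset (Fin n)).card : ℝ) / (n : ℝ)

/-- Anonymity at the level of probabilistic ballots. -/
def BallotAnonymous (β : Finset (Fin n) → Lottery m) : Prop :=
  ∀ S S' : Finset (Fin n), S.Nonempty → S'.Nonempty → S.card = S'.card → β S = β S'

/-- Per-capita monotonicity w.r.t. `a_p` and `a_q`. -/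
def PerCapitaMonotone (p q : Fin m) (β : Finset (Fin n) → Lottery m) : Prop :=
  ∀ S S' : Finset (Fin n), S.Nonempty → S ⊂ S' → S' ⊂ Finset.univ →
    (∀ t : Fin m, q ≤ t →
      (β S).prob (upSet t) / (S.card : ℝ) ≤ (β S').prob (upSet t) / (S'.card : ℝ)) ∧
    (∀ s : Fin m, s ≤ p →
      (β Sᶜ).prob (downSet s) / (S.card : ℝ) ≤ (β S'ᶜ).prob (downSet s) / (S'.card : ℝ))

/-- Decomposability: `φ` is a mixture of finitely many unanimous and strategy-proof
deterministic social choice functions. -/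
def Decomposable [NeZero m] {D : Set (Pref m)} (φ : Profile D n → Lottery m) : Prop :=
  ∃ (r : ℕ) (f : Fin r → (Profile D n → Fin m)) (α : Fin r → ℝ),
    (∀ k, 0 < α k) ∧ ∑ k, α k = 1 ∧
    (∀ k, Unanimous (fun P => degLottery (f k P)) ∧
          StrategyProof (fun P => degLottery (f k P))) ∧
    ∀ (P : Profile D n) (a : Fin m),
      (φ P).1 a = ∑ k, α k * (if f k P = a then 1 else 0)

/-- `b̂_S^R`: the `≺`-minimum of `supp(β_S) ∩ R` (with the convention `b̂_N^R = a_m`). -/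
def bR [NeZero m] (β : Finset (Fin n) → Lottery m) (q : Fin m) (S : Finset (Fin n)) : Fin m :=
  if h : ((β S).supp ∩ upSet q).Nonempty then ((β S).supp ∩ upSet q).min' h else lastAlt m

/-- `b̂_S^L`: the `≺`-maximum of `supp(β_S) ∩ L` (with the convention `b̂_∅^L = a_1`). -/
def bL [NeZero m] (β : Finset (Fin n) → Lottery m) (p : Fin m) (S : Finset (Fin n)) : Fin m :=
  if h : ((β S).supp ∩ downSet p).Nonempty then ((β S).supp ∩ downSet p).max' h else 0

/-- `α = min over nonempty S ⊂ N of min(β_S(b̂_S^R)/|S|, β_S(b̂_S^L)/(n-|S|))`. -/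
def alphaVal [NeZero m] (β : Finset (Fin n) → Lottery m) (p q : Fin m) : ℝ :=
  sInf {x : ℝ | ∃ S : Finset (Fin n), S.Nonempty ∧ S ≠ Finset.univ ∧
    x = min ((β S).1 (bR β q S) / (S.card : ℝ))
            ((β S).1 (bL β p S) / ((n : ℝ) - (S.card : ℝ)))}

/-- `γ_S = (|S|/n) e_{b̂_S^R} + ((n-|S|)/n) e_{b̂_S^L}`, pointwise. -/
def gammaFun [NeZero m] (β : Finset (Fin n) → Lottery m) (p q : Fin m)
    (S : Finset (Fin n)) (a : Fin m) : ℝ :=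
  ((S.card : ℝ) / (n : ℝ)) * (if a = bR β q S then 1 else 0)
  + (((n : ℝ) - (S.card : ℝ)) / (n : ℝ)) * (if a = bL β p S then 1 else 0)

/-- The max-min formula `f(P) = max_{S ⊆ N} min({r_1(P_j) : j ∈ S} ∪ {b_S})`. -/
def fbrOutcome [NeZero m] {D : Set (Pref m)} (b : Finset (Fin n) → Fin m)
    (P : Profile D n) : Fin m :=
  Finset.univ.sup' Finset.univ_nonempty
    (fun S : Finset (Fin n) =>
      (insert (b S) (S.image (fun j => topOf (P j)))).inf' (Finset.insert_nonempty _ _) id)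

/-- `f` is a `(p,q)`-fixed ballot rule with deterministic ballots `b` and constrained
dictator `i`. -/
def IsFBRWith [NeZero m] {D : Set (Pref m)} (p q : Fin m) (f : Profile D n → Fin m)
    (b : Finset (Fin n) → Fin m) (i : Fin n) : Prop :=
  b Finset.univ = lastAlt m ∧ b ∅ = 0 ∧
  (∀ S T : Finset (Fin n), S ⊂ T → b S ≤ b T) ∧
  (∀ S : Finset (Fin n), (i ∈ S → q ≤ b S) ∧ (i ∉ S → b S ≤ p)) ∧
  ∀ P : Profile D n, f P = fbrOutcome b P

end PFBRPaper

open PFBRPaper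

section GraphPart

variable {α : Type*} {r : α → α → Prop}

theorem exists_simple_to_set {Q : α → Prop} {u z : α} (h : Relation.ReflTransGen r u z)
    (hz : Q z) : ¬ Q u → ∃ (T : List α) (e w : α), T.Nodup ∧ T.IsChain r ∧ T.head? = some u ∧
      T.getLast? = some e ∧ (∀ x ∈ T, ¬ Q x) ∧ r e w ∧ Q w := by
  induction h using Relation.ReflTransGen.head_induction_on with
  | refl => intro h; exact absurd hz h
  | head hab _ ih =>
    rename_i a c _
    intro ha
    by_cases hc : Q c
    · exact ⟨[a], a, c, by simp, by simp, by simp, by simp, by simpa using ha, hab, hc⟩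
    · obtain ⟨T, e, w, h1, h2, h3, h4, h5, h6, h7⟩ := ih hc
      by_cases hT : a ∈ T
      · obtain ⟨s, t, rfl⟩ := List.append_of_mem hT
        refine ⟨a :: t, e, w, ?_, ?_, by simp, ?_, ?_, h6, h7⟩
        · exact (List.nodup_append.1 h1).2.1
        · exact (List.isChain_append.1 h2).2.1
        · simpa [List.getLast?_append] using h4
        · intro x hx; exact h5 x (by simp at hx ⊢; tauto)
      · refine ⟨a :: T, e, w, ?_, ?_, by simp, ?_, ?_, h6, h7⟩
        · simp [hT, h1]
        · cases T with
          | nil => simp at h3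
          | cons b T => simp at h3; subst h3; simp [hab, h2]
        · cases T with
          | nil => simp at h3
          | cons b T => simpa using h4
        · simpa [ha] using h5

def SPath (r : α → α → Prop) (x y : α) (l : List α) : Prop :=
  l.Nodup ∧ l.IsChain r ∧ l.head? = some x ∧ l.getLast? = some y

theorem splice {x y v w u e : α} {l1 l2 l3 T : List α}
    (hQ : SPath r x y (l1 ++ v :: l2 ++ w :: l3))
    (h1 : T.Nodup) (h2 : T.IsChain r) (h3 : T.head? = some u) (h4 : T.getLast? = some e)
    (h5 : ∀ a ∈ T, a ∉ l1 ++ v :: l2 ++ w :: l3) (hv : r v u) (hw : r e w) :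
    SPath r x y (l1 ++ [v] ++ T ++ w :: l3) := by
  obtain ⟨q1, q2, q3, q4⟩ := hQ
  refine ⟨?_, ?_, ?_, ?_⟩
  · simp [List.nodup_append] at q1 h5 ⊢
    obtain ⟨n1, ⟨⟨n2, n3, n4⟩, n5, ⟨n6, n7⟩, n8⟩, n9⟩ := q1
    refine ⟨n1, ⟨⟨fun h => (h5 v h).2.1 rfl, n3, n4⟩, h1, ⟨n6, n7⟩, fun a ha =>
      ⟨(h5 a ha).2.2.2.1, fun c hc hac => (h5 a ha).2.2.2.2 (hac ▸ hc)⟩⟩, fun a ha =>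
      ⟨(n9 a ha).1, fun c hc hac => ?_⟩⟩
    rcases hc with hc | hc
    · exact (h5 c hc).1 (hac ▸ ha)
    · exact (n9 a ha).2 c (.inr hc) hac
  · have q2' : (l1 ++ [v]).IsChain r := by
      have : l1 ++ v :: l2 ++ w :: l3 = (l1 ++ [v]) ++ (l2 ++ w :: l3) := by simp
      rw [this] at q2
      exact (List.isChain_append.1 q2).1
    have q3' : (w :: l3).IsChain r := (List.isChain_append.1 q2).2.1
    refine List.isChain_append.2 ⟨List.isChain_append.2 ⟨q2', h2, ?_⟩, q3', ?_⟩
    · simp [h3, hv]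
    · rw [List.getLast?_append, h4]; simp [hw]
  · simp at q3 ⊢
    cases l1 <;> simp_all
  · rw [List.getLast?_append] at q4 ⊢
    simpa using q4

theorem step_mem (hs : ∀ a b, r a b → r b a) {x y v u : α}
    (hE : ∃ l, SPath r x y l ∧ v ∈ l) (hvu : r v u)
    (hW : u ≠ v → ∃ z, (z = x ∨ z = y) ∧
      Relation.ReflTransGen (fun a b => r a b ∧ a ≠ v ∧ b ≠ v) u z) :
    ∃ l, SPath r x y l ∧ u ∈ l := by
  obtain ⟨l, hl, hvl⟩ := hE
  by_cases hul : u ∈ l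
  · exact ⟨l, hl, hul⟩
  have huv : u ≠ v := by rintro rfl; exact hul hvl
  obtain ⟨z, hz, hw⟩ := hW huv
  have hzl : z ∈ l := by
    obtain ⟨_, _, h3, h4⟩ := hl
    rcases hz with rfl | rfl
    · exact List.mem_of_mem_head? h3
    · exact List.mem_of_mem_getLast? h4
  obtain ⟨T, e, w, h1, h2, h3, h4, h5, h6, h7⟩ :=
    exists_simple_to_set (Q := fun a => a ∈ l) hw hzl hul
  have h2' : T.IsChain r := h2.imp (fun _ _ h => h.1)
  have huT : u ∈ T := List.mem_of_mem_head? h3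
  obtain ⟨s, t, rfl⟩ := List.append_of_mem hvl
  simp only [List.mem_append, List.mem_cons] at h7
  rcases h7 with h7 | h7 | h7
  · obtain ⟨s1, s2, rfl⟩ := List.append_of_mem h7
    refine ⟨s1 ++ [w] ++ T.reverse ++ v :: t, splice (l2 := s2) hl (u := e) (e := u)
      (by simpa using h1) ?_ (by simpa using h4) (by simpa using h3) (by simpa using h5)
      (hs _ _ h6.1) (hs _ _ hvu), by simp [huT]⟩
    rw [List.isChain_reverse]
    exact h2'.imp (fun a b h => hs _ _ h)
  · exact absurd h7 h6.2.2
  · obtain ⟨s1, s2, rfl⟩ := List.append_of_mem h7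
    have he : s ++ v :: (s1 ++ w :: s2) = s ++ v :: s1 ++ w :: s2 := by simp
    rw [he] at hl h5
    exact ⟨s ++ [v] ++ T ++ w :: s2, splice hl h1 h2' h3 h4 h5 hvu h6.1, by simp [huT]⟩

end GraphPart

section DomainPart

variable {m : ℕ} [NeZero m] {D : Set (Pref m)}

theorem sc_symm {a b : Fin m} (h : StronglyConnected D a b) : StronglyConnected D b a := by
  obtain ⟨h, P, hP, P', hP', h1, h2, h3, h4, h5⟩ := h
  exact ⟨h.symm, P', hP', P, hP, h3, h4, h1, h2, fun k hk => (h5 k hk).symm⟩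

theorem adj_top (hm : 3 ≤ m) {P P' : Pref m} (hP : P ∈ D) (hP' : P' ∈ D)
    (h : Adjacent P P') : P 0 = P' 0 ∨ StronglyConnected D (P 0) (P' 0) := by
  obtain ⟨_, k, hk, h1, h2, h3⟩ := h
  rcases Nat.eq_zero_or_pos k with rfl | hk0
  · right
    have e0 : (⟨0, Nat.lt_of_succ_lt hk⟩ : Fin m) = 0 := rfl
    have e1 : (⟨0 + 1, hk⟩ : Fin m) = 1 := by
      apply Fin.ext
      show 1 = 1 % m
      rw [Nat.mod_eq_of_lt (by omega)]
    rw [e0, e1] at h1 h2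
    refine ⟨?_, P, hP, P', hP', rfl, h2, rfl, h1.symm, ?_⟩
    · rw [← h2]
      intro h
      have := congrArg Fin.val (P.injective h)
      rw [← e1] at this
      simp at this
    · intro k hk
      exact h3 k (by omega) (by omega)
  · left
    exact h3 0 (by simp; omega) (by simp)

/-- edges avoiding `b` -/
def Av (D : Set (Pref m)) (b : Fin m) (x y : Fin m) : Prop :=
  StronglyConnected D x y ∧ x ≠ b ∧ y ≠ b

theorem av_symm {b x y : Fin m} (h : Relation.ReflTransGen (Av D b) x y) :
    Relation.ReflTransGen (Av D b) y x := by
  induction h with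
  | refl => exact .refl
  | tail _ h ih => exact Relation.ReflTransGen.head ⟨sc_symm h.1, h.2.2, h.2.1⟩ ih

theorem top_ne {P : Pref m} {a b : Fin m} (h : Prefers P a b) : P 0 ≠ b := by
  rintro rfl
  simp [Prefers] at h

theorem prefers_total {P : Pref m} {a b : Fin m} (hab : a ≠ b) (h : ¬ Prefers P a b) :
    Prefers P b a := by
  unfold Prefers at *
  have : P.symm a ≠ P.symm b := fun h => hab (P.symm.injective h)
  exact lt_of_le_of_ne (not_lt.1 h) this.symm

theorem prefers_asymm {P : Pref m} {a b : Fin m} (h : Prefers P a b) : ¬ Prefers P b a := by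
  unfold Prefers at *
  exact not_lt.2 h.le

theorem core (hm : 3 ≤ m) (hD : NoRestorationDomain D) {P P' : Pref m} (hP : P ∈ D)
    (hP' : P' ∈ D) {a b : Fin m} (h : Prefers P a b) (h' : Prefers P' a b) :
    Relation.ReflTransGen (Av D b) (P 0) (P' 0) := by
  by_cases hPP : P = P'
  · subst hPP; exact .refl
  obtain ⟨π, v, ⟨hv, hin, _, h0, h1, hadj⟩, hnr⟩ := hD P hP P' hP' hPP a b
  have hab : a ≠ b := by rintro rfl; exact lt_irrefl _ h
  have key : ∀ j < v, Prefers (π j) a b := by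
    intro j hj
    by_contra hc
    have hc' := prefers_total hab hc
    have hj0 : j ≠ 0 := by rintro rfl; rw [h0] at hc; exact hc h
    have hj1 : j ≠ v - 1 := by rintro rfl; rw [h1] at hc; exact hc h'
    exact (hnr 0 j (v-1) (by omega) (by omega) (by omega)).1
      ⟨by rwa [h0], hc', by rwa [h1]⟩
  have main : ∀ j < v, Relation.ReflTransGen (Av D b) (P 0) (π j 0) := by
    intro j
    induction j with
    | zero => intro _; rw [h0]
    | succ j ih =>
      intro hj
      have := ih (by omega)
      rcases adj_top hm (hin j (by omega)) (hin (j+1) hj) (hadj j hj) with e | e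
      · rwa [← e]
      · exact this.tail ⟨e, top_ne (key j (by omega)), top_ne (key (j+1) hj)⟩
  have := main (v-1) (by omega)
  rwa [h1] at this

def Cut (D : Set (Pref m)) (c : Fin m) : Prop :=
  ∀ a b : Fin m, a < c → c < b → ¬ StronglyConnected D a b

theorem cut_lt {c x y : Fin m} (hc : Cut D c) (h : Relation.ReflTransGen (Av D c) x y)
    (hx : x < c) : y < c := by
  induction h with
  | refl => exact hx
  | tail _ h ih =>
    rcases lt_trichotomy _ c with h1 | h1 | h1
    · exact h1
    · exact absurd h1 h.2.2
    · exact absurd h.1 (hc _ _ ih h1)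

theorem cut_pref (hm : 3 ≤ m) (hD : RegularDomain D) {c k : Fin m} {P : Pref m} (hP : P ∈ D)
    (hc : Cut D c) (h : (P 0 < c ∧ c < k) ∨ (k < c ∧ c < P 0)) : Prefers P c k := by
  have hck : c ≠ k := by rcases h with h | h; exacts [h.2.ne, h.1.ne']
  by_contra hn
  have hn' := prefers_total hck hn
  obtain ⟨P', hP', ht⟩ := hD.1 k
  have h' : Prefers P' k c := by
    unfold Prefers
    rw [← ht, Equiv.symm_apply_apply]
    refine lt_of_le_of_ne (Fin.zero_le _) ?_
    intro h
    apply hck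
    rw [← ht, h, Equiv.apply_symm_apply]
  have W := core hm hD.2.2 hP hP' hn' h'
  rw [ht] at W
  rcases h with h | h
  · exact absurd (cut_lt hc W h.1) (not_lt.2 h.2.le)
  · exact absurd (cut_lt hc (av_symm W) h.1) (not_lt.2 h.2.le)

theorem top_pref {P : Pref m} {k c : Fin m} (ht : P 0 = k) (hck : c ≠ k) : Prefers P k c := by
  unfold Prefers
  rw [← ht, Equiv.symm_apply_apply]
  refine lt_of_le_of_ne (Fin.zero_le _) ?_
  intro h
  apply hck
  rw [← ht, h, Equiv.apply_symm_apply]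

theorem W1 (hm : 3 ≤ m) (hD : RegularDomain D) {u v : Fin m} (h : u < v) :
    Relation.ReflTransGen (Av D v) 0 u := by
  obtain ⟨P', hP', ht⟩ := hD.1 u
  have := core hm hD.2.2 hD.2.1.1 hP' (a := u) (b := v) (by simpa [Prefers] using h)
    (top_pref ht h.ne')
  simpa [ht] using this

theorem W2 (hm : 3 ≤ m) (hD : RegularDomain D) {u v : Fin m} (h : v < u) :
    Relation.ReflTransGen (Av D v) (lastAlt m) u := by
  obtain ⟨P', hP', ht⟩ := hD.1 u
  have := core hm hD.2.2 hD.2.1.2 hP' (a := u) (b := v)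
    (by simpa [Prefers, revPref] using h) (top_pref ht h.ne)
  have e : revPref m 0 = lastAlt m := by
    apply Fin.ext
    simp [revPref, lastAlt, Fin.val_rev]
  rwa [ht, e] at this

theorem toSC {b x y : Fin m} (h : Relation.ReflTransGen (Av D b) x y) :
    Relation.ReflTransGen (StronglyConnected D) x y :=
  Relation.ReflTransGen.mono (fun _ _ h => h.1) _ _ h

theorem on_path (hm : 3 ≤ m) (hD : RegularDomain D) (k : Fin m) (hk : k ≠ lastAlt m) :
    ∃ l, SPath (StronglyConnected D) 0 (lastAlt m) l ∧ k ∈ l := by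
  have hlast : ∀ k : Fin m, k ≠ lastAlt m → k < lastAlt m := by
    intro k hk
    refine lt_of_le_of_ne ?_ hk
    rw [Fin.le_def]; simp only [lastAlt]; omega
  have hstart : ∃ l, SPath (StronglyConnected D) 0 (lastAlt m) l ∧ 0 ∈ l := by
    have A := W1 hm hD (u := ⟨1, by omega⟩) (v := lastAlt m)
      (by rw [Fin.lt_def]; simp only [lastAlt]; omega)
    have B := W2 hm hD (u := ⟨1, by omega⟩) (v := 0) (by rw [Fin.lt_def]; simp)
    have C := (toSC A).trans (toSC (av_symm B))
    obtain ⟨T, e, w, h1, h2, h3, h4, h5, h6, h7⟩ :=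
      exists_simple_to_set (Q := fun a => a = lastAlt m) C rfl
        (by intro h; have := congrArg Fin.val h; simp [lastAlt] at this; omega)
    subst h7
    refine ⟨T ++ [lastAlt m], ⟨?_, ?_, ?_, ?_⟩, ?_⟩
    · simp [List.nodup_append, h1]; exact h5
    · rw [List.isChain_append]; simp [h2, h4, h6]
    · simp [List.head?_append, h3]
    · simp
    · simp [List.mem_of_mem_head? h3]
  have C := toSC (W1 hm hD (hlast k hk))
  induction C with
  | refl => exact hstart
  | tail _ h ih =>
    rename_i b c _
    have ih' : ∃ l, SPath (StronglyConnected D) 0 (lastAlt m) l ∧ b ∈ l := by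
      by_cases hb : b = lastAlt m
      · obtain ⟨l, hl, _⟩ := hstart
        exact ⟨l, hl, by rw [hb]; exact List.mem_of_mem_getLast? hl.2.2.2⟩
      · exact ih hb
    refine step_mem (fun _ _ => sc_symm) ih' h ?_
    intro hcb
    rcases lt_or_gt_of_ne hcb with h | h
    · exact ⟨0, .inl rfl, av_symm (W1 hm hD h)⟩
    · exact ⟨_, .inr rfl, av_symm (W2 hm hD h)⟩

theorem last_edge {r : Fin m → Fin m → Prop} {x y : Fin m} (h : Relation.ReflTransGen r x y)
    (hxy : x ≠ y) : ∃ z, r z y := by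
  rcases Relation.ReflTransGen.cases_tail h with h | ⟨z, _, h⟩
  · exact absurd h.symm hxy
  · exact ⟨z, h⟩

/-- crossing edge -/
theorem cross {r : Fin m → Fin m → Prop} {S : Fin m → Prop} {x y : Fin m}
    (h : Relation.ReflTransGen r x y) (hx : S x) (hy : ¬ S y) : ∃ a b, r a b ∧ S a ∧ ¬ S b := by
  induction h with
  | refl => exact absurd hx hy
  | tail _ h ih =>
    rename_i b c _
    by_cases hb : S b
    · exact ⟨b, c, h, hb, hy⟩
    · exact ih hb

theorem no_leaf (hm : 3 ≤ m) (hD : RegularDomain D) {p q p1 q1 : Fin m}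
    (hp : Cut D p) (hq : Cut D q) (hp1 : ¬ Cut D p1) (hq1 : ¬ Cut D q1)
    (ep : (p1 : ℕ) = p + 1) (eq : (q : ℕ) = q1 + 1) (hpq : p1 ≤ q1) (a : Fin m) :
    ¬ IsLeaf D (Set.Icc p q) a := by
  rintro ⟨⟨ha1, ha2⟩, b, ⟨⟨hb1, hb2⟩, hab⟩, huniq⟩
  have hne := hab.1
  suffices ∃ c, c ≠ b ∧ p ≤ c ∧ c ≤ q ∧ StronglyConnected D a c by
    obtain ⟨c, h1, h2, h3, h4⟩ := this
    exact h1 (huniq c ⟨⟨h2, h3⟩, h4⟩)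
  by_cases hap : a = p
  · subst hap
    by_cases hb : b = p1
    · subst hb
      unfold Cut at hp1
      push Not at hp1
      obtain ⟨x, y, hx, hy, hxy⟩ := hp1
      have hxa : x = a := by
        by_contra hc
        exact hp x y (by omega) (by omega) hxy
      subst hxa
      refine ⟨y, by omega, by omega, ?_, hxy⟩
      by_contra hc
      exact hq x y (by omega) (by omega) hxy
    · have W := W1 hm hD (u := p1) (v := b) (by omega)
      obtain ⟨x, y, hxy, hx, hy⟩ := cross (S := fun t => t ≤ a) W (Fin.zero_le _)
        (by simp; omega)
      have hxa : x = a := by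
        by_contra hc
        exact hp x y (by omega) (by omega) hxy.1
      subst hxa
      refine ⟨y, hxy.2.2, by omega, ?_, hxy.1⟩
      by_contra hc
      exact hq x y (by omega) (by omega) hxy.1
  by_cases haq : a = q
  · subst haq
    by_cases hb : b = q1
    · subst hb
      unfold Cut at hq1
      push Not at hq1
      obtain ⟨x, y, hx, hy, hxy⟩ := hq1
      have hxa : y = a := by
        by_contra hc
        exact hq x y (by omega) (by omega) hxy
      subst hxa
      refine ⟨x, by omega, ?_, by omega, sc_symm hxy⟩
      by_contra hc
      exact hp x y (by omega) (by omega) hxy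
    · have W := W2 hm hD (u := q1) (v := b) (by omega)
      obtain ⟨x, y, hxy, hx, hy⟩ := cross (S := fun t => a ≤ t) W
        (by rw [Fin.le_def]; simp only [lastAlt]; omega)
        (by simp; omega)
      have hxa : x = a := by
        by_contra hc
        exact hq y x (by omega) (by omega) (sc_symm hxy.1)
      subst hxa
      refine ⟨y, hxy.2.2, ?_, by omega, hxy.1⟩
      by_contra hc
      exact hp y x (by omega) (by omega) (sc_symm hxy.1)
  have : ∃ z, Av D b z a := by
    rcases lt_or_gt_of_ne hne with h | h
    · exact last_edge (W1 hm hD h) (by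
        rintro rfl; have := Fin.zero_le p; omega)
    · exact last_edge (W2 hm hD h) (by
        rintro rfl
        have : q ≤ lastAlt m := by rw [Fin.le_def]; simp only [lastAlt]; omega
        omega)
  obtain ⟨z, hz⟩ := this
  refine ⟨z, hz.2.1, ?_, ?_, sc_symm hz.1⟩
  · by_contra hc
    exact hp z a (by omega) (by omega) hz.1
  · by_contra hc
    exact hq a z (by omega) (by omega) (sc_symm hz.1)

theorem hybrid_sub (hm : 3 ≤ m) (hD : RegularDomain D) {p q : Fin m}
    (hp : ∀ c, c ≤ p → Cut D c) (hq : ∀ c, q ≤ c → Cut D c) : D ⊆ hybridDomain p q := by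
  intro P hP
  refine ⟨?_, ?_, ?_⟩
  · intro r s hrs h
    have hc : Cut D s := by
      rcases hrs with h | h
      · exact hp s h.2
      · exact hq s h.2
    exact cut_pref hm hD hP hc (by tauto)
  · intro h0 l h1 _ h3
    rcases eq_or_lt_of_le h0 with h | h
    · exact top_pref h h3
    · exact cut_pref hm hD hP (hp p le_rfl) (.inl ⟨h, lt_of_le_of_ne h1 h3.symm⟩)
  · intro h0 l _ h1 h3
    rcases eq_or_lt_of_le h0 with h | h
    · exact top_pref h.symm h3
    · exact cut_pref hm hD hP (hq q le_rfl) (.inr ⟨lt_of_le_of_ne h1 h3, h⟩)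

end DomainPart

/-- Every regular domain is a hybrid* domain. -/
theorem every_regular_domain_is_hybrid_star (m : ℕ) [NeZero m] (hm : 3 ≤ m)
    (D : Set (Pref m)) (hD : RegularDomain D) :
    ∃ p q : Fin m, p < q ∧ IsHybridStar D p q := by
  classical
  have hpath : ∀ k : Fin m, k ≠ 0 → k ≠ lastAlt m →
      ∃ l, VertexPathBetween D Set.univ 0 (lastAlt m) l ∧ k ∈ l := by
    intro k _ hk
    obtain ⟨l, ⟨h1, h2, h3, h4⟩, hkl⟩ := on_path hm hD k hk
    exact ⟨l, ⟨⟨List.ne_nil_of_mem hkl, h1, fun _ _ => trivial, h2⟩, h3, h4⟩, hkl⟩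
  by_cases hall : ∀ c, Cut D c
  · refine ⟨⟨0, by omega⟩, ⟨1, by omega⟩, by simp [Fin.lt_def],
      hybrid_sub hm hD (fun c _ => hall c) (fun c _ => hall c), hpath, ?_⟩
    intro h
    simp at h
  push Not at hall
  obtain ⟨c0, hc0⟩ := hall
  let N : Finset (Fin m) := Finset.univ.filter (fun c => ¬ Cut D c)
  have hN : N.Nonempty := ⟨c0, by simp [N, hc0]⟩
  have h1 : ¬ Cut D (N.min' hN) := by simpa [N] using N.min'_mem hN
  have h2 : ¬ Cut D (N.max' hN) := by simpa [N] using N.max'_mem hN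
  have h3 : ∀ c, c < N.min' hN → Cut D c := by
    intro c hc
    by_contra h
    exact absurd (N.min'_le c (by simp [N, h])) (not_le.2 hc)
  have h4 : ∀ c, N.max' hN < c → Cut D c := by
    intro c hc
    by_contra h
    exact absurd (N.le_max' c (by simp [N, h])) (not_le.2 hc)
  have h5 : N.min' hN ≤ N.max' hN := N.min'_le _ (N.max'_mem hN)
  generalize N.min' hN = p1 at *
  generalize N.max' hN = q1 at *
  have hp1 : (p1 : ℕ) ≠ 0 := by
    intro h
    apply h1
    intro a b ha
    exact absurd ha (by omega)
  have hq1 : (q1 : ℕ) + 1 < m := by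
    by_contra h
    apply h2
    intro a b _ hb
    exact absurd hb (by omega)
  refine ⟨⟨p1 - 1, by omega⟩, ⟨q1 + 1, hq1⟩, ?_, ?_, hpath, ?_⟩
  · simp [Fin.lt_def]; omega
  · refine hybrid_sub hm hD (fun c hc => h3 c ?_) (fun c hc => h4 c ?_)
    · rw [Fin.le_def] at hc; rw [Fin.lt_def]; simp at hc; omega
    · rw [Fin.le_def] at hc; rw [Fin.lt_def]; simp at hc; omega
  · intro _ a
    refine no_leaf hm hD (h3 _ ?_) (h4 _ ?_) h1 h2 ?_ rfl h5 a
    · rw [Fin.lt_def]; show (p1 : ℕ) - 1 < p1; omega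
    · rw [Fin.lt_def]; simp
    · show (p1 : ℕ) = p1 - 1 + 1; omega
end
end

section
/- Let 1 ≤ p < q ≤ m with q − p > 1. Every (p, q)-PFBR φ : [D_≺(p, q)]^n → Δ(A) defined on the full (p, q)-hybrid domain is unanimous and strategy-proof. -/
open Finset

noncomputable section

open PFBRPaper

theorem aux_abel (m : ℕ) (u d : ℕ → ℝ) (h0 : d 0 = 0) :
    ∑ a ∈ range (m + 1), u a * (d a - d (a + 1)) =
      ∑ k ∈ range m, d (k + 1) * (u (k + 1) - u k) - u m * d (m + 1) := by
  induction m with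
  | zero => simp [h0]
  | succ m ih => rw [sum_range_succ, ih, sum_range_succ _ m]; ring

theorem aux_sum (m : ℕ) (u d : ℕ → ℝ) (h0 : d 0 = 0) (hm : d (m + 1) = 0)
    (s t : ℕ) (hst : s ≤ t) (htm : t ≤ m) (e : ℝ)
    (h1 : ∀ k, s ≤ k → k < t → d (k + 1) = e)
    (h2 : ∀ k, k < m → ¬ (s ≤ k ∧ k < t) → d (k + 1) * (u (k + 1) - u k) ≤ 0)
    (h3 : e * (u t - u s) ≤ 0) :
    ∑ a ∈ range (m + 1), u a * (d a - d (a + 1)) ≤ 0 := by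
  rw [aux_abel m u d h0, hm]
  have hle : ∑ k ∈ range m, d (k + 1) * (u (k + 1) - u k) ≤
      ∑ k ∈ Ico s t, d (k + 1) * (u (k + 1) - u k) := by
    rw [← sum_sdiff (show Ico s t ⊆ range m by
      intro k hk; simp only [Finset.mem_Ico, Finset.mem_range] at *; omega)]
    have : ∑ k ∈ range m \ Ico s t, d (k + 1) * (u (k + 1) - u k) ≤ 0 := by
      apply sum_nonpos
      intro k hk
      simp only [Finset.mem_sdiff, Finset.mem_Ico, Finset.mem_range] at hk
      exact h2 k hk.1 hk.2
    linarith
  have heq : ∑ k ∈ Ico s t, d (k + 1) * (u (k + 1) - u k) = e * (u t - u s) := by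
    rw [← Finset.sum_Ico_sub u hst, Finset.mul_sum]
    apply sum_congr rfl
    intro k hk
    rw [Finset.mem_Ico] at hk
    rw [h1 k hk.1 hk.2]
  linarith

theorem aux_prob_mid {m : ℕ} (lam : Lottery m) (p q k : Fin m) (hpk : p < k) (hkq : k ≤ q)
    (h : lam.prob (upSet q) + lam.prob (downSet p) = 1) :
    lam.prob (upSet k) = lam.prob (upSet q) := by
  have h1 : lam.prob (upSet q) ≤ lam.prob (upSet k) := by
    apply sum_le_sum_of_subset_of_nonneg
    · intro a ha
      simp only [upSet, Finset.mem_filter, Finset.mem_univ, true_and] at *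
      exact hkq.trans ha
    · intro a _ _; exact lam.2.1 a
  have h2 : lam.prob (upSet k) + lam.prob (downSet p) ≤ 1 := by
    unfold Lottery.prob
    rw [← sum_union]
    · refine le_trans ?_ (le_of_eq lam.2.2)
      apply sum_le_sum_of_subset_of_nonneg (subset_univ _)
      intro a _ _; exact lam.2.1 a
    · rw [Finset.disjoint_left]
      intro a ha hb
      simp only [upSet, downSet, Finset.mem_filter, Finset.mem_univ, true_and] at *
      exact absurd (hpk.trans_le (ha.trans hb)) (lt_irrefl _)
  linarith

theorem aux_tail_eq {m n : ℕ} [NeZero m] {D : Set (Pref m)} (β : Finset (Fin n) → Lottery m)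
    (P P' : Profile D n) (i : Fin n) (hP : ∀ j, j ≠ i → P' j = P j) (k : ℕ)
    (h : k ≤ (topOf (P i) : ℕ) ↔ k ≤ (topOf (P' i) : ℕ)) :
    tailProb β P' k = tailProb β P k := by
  unfold tailProb
  split_ifs with hk
  · have : voterSet P' ⟨k, hk⟩ = voterSet P ⟨k, hk⟩ := by
      ext j
      simp only [voterSet, Finset.mem_filter, Finset.mem_univ, true_and, Fin.le_def]
      by_cases hj : j = i
      · subst hj; exact h.symm
      · rw [hP j hj]
    rw [this]
  · rfl

theorem aux_tail_up {m n : ℕ} [NeZero m] {D : Set (Pref m)} (β : Finset (Fin n) → Lottery m)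
    (P P' : Profile D n) (i : Fin n) (hP : ∀ j, j ≠ i → P' j = P j) (k : ℕ)
    (h : (topOf (P i) : ℕ) < k) (h' : k ≤ (topOf (P' i) : ℕ)) (hmon : BallotMonotone β)
    (p q : Fin m) (ε : Fin n → ℝ) (hε : ∑ i, ε i = 1)
    (hc : ∀ S : Finset (Fin n),
      (β S).prob (upSet q) = ∑ i ∈ S, ε i ∧
      (β S).prob (downSet p) = ∑ i ∈ Sᶜ, ε i) :
    tailProb β P k ≤ tailProb β P' k ∧
      ((p : ℕ) < k → k ≤ (q : ℕ) → tailProb β P' k = tailProb β P k + ε i) := by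
  have hk : k < m := lt_of_le_of_lt h' (topOf (P' i)).2
  have hni : i ∉ voterSet P ⟨k, hk⟩ := by
    simp only [voterSet, Finset.mem_filter, Finset.mem_univ, true_and, Fin.le_def]
    omega
  have hins : voterSet P' ⟨k, hk⟩ = insert i (voterSet P ⟨k, hk⟩) := by
    ext j
    simp only [voterSet, Finset.mem_filter, Finset.mem_univ, true_and, Finset.mem_insert,
      Fin.le_def]
    by_cases hj : j = i
    · subst hj; simp [h']
    · rw [hP j hj]; simp [hj]
  unfold tailProb
  rw [dif_pos hk, dif_pos hk, hins]
  refine ⟨hmon _ _ (Finset.ssubset_insert hni) _, fun hpk hkq => ?_⟩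
  have hs : ∀ S : Finset (Fin n), (β S).prob (upSet ⟨k, hk⟩) = ∑ i ∈ S, ε i := by
    intro S
    rw [aux_prob_mid (β S) p q ⟨k, hk⟩ hpk hkq, (hc S).1]
    rw [(hc S).1, (hc S).2, Finset.sum_add_sum_compl, hε]
  rw [hs, hs, Finset.sum_insert hni, add_comm]

/-- Indicator of the upper contour set. -/
def auxU {m : ℕ} (P : Pref m) (k a : ℕ) : ℝ :=
  if h : a < m then (if (P.symm ⟨a, h⟩ : ℕ) < k then 1 else 0) else 0

theorem aux_topSum {m : ℕ} (lam : Lottery m) (P : Pref m) (k : ℕ) :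
    topSum lam P k = ∑ a : Fin m, auxU P k a * lam.1 a := by
  unfold topSum
  rw [Finset.sum_filter, ← Equiv.sum_comp P (fun a : Fin m => auxU P k a * lam.1 a)]
  apply sum_congr rfl
  intro t _
  simp [auxU]

theorem auxU_le {m : ℕ} (P : Pref m) (k a b : ℕ) (ha : a < m) (hb : b < m)
    (h : P.symm ⟨a, ha⟩ ≤ P.symm ⟨b, hb⟩) : auxU P k b ≤ auxU P k a := by
  unfold auxU
  rw [dif_pos ha, dif_pos hb]
  rw [Fin.le_def] at h
  split_ifs <;> first | omega | norm_num

theorem auxU_top {m : ℕ} [NeZero m] (P : Pref m) (k b : ℕ) (hb : b < m) :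
    auxU P k b ≤ auxU P k (P 0 : ℕ) := by
  apply auxU_le P k _ _ (P 0).2 hb
  simp

theorem auxU_right {m : ℕ} [NeZero m] (p q : Fin m) (P : Pref m) (hP : IsHybridPref p q P)
    (k a : ℕ) (ha : a + 1 < m) (hx : (P 0 : ℕ) ≤ a)
    (hpq : a + 1 ≤ (p : ℕ) ∨ (q : ℕ) ≤ a) : auxU P k (a + 1) ≤ auxU P k a := by
  rcases hx.eq_or_lt with h | h
  · rw [← h]; exact auxU_top P k _ (by omega)
  · apply auxU_le P k _ _ (by omega) ha
    apply le_of_lt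
    apply hP.1
    · simp only [Fin.le_def]; omega
    · right; simp only [Fin.lt_def]; omega

theorem auxU_left {m : ℕ} [NeZero m] (p q : Fin m) (P : Pref m) (hP : IsHybridPref p q P)
    (k a : ℕ) (ha : a + 1 < m) (hx : a + 1 ≤ (P 0 : ℕ))
    (hpq : a + 1 ≤ (p : ℕ) ∨ (q : ℕ) ≤ a) : auxU P k a ≤ auxU P k (a + 1) := by
  rcases hx.eq_or_lt with h | h
  · rw [h]; exact auxU_top P k _ (by omega)
  · apply auxU_le P k _ _ ha (by omega)
    apply le_of_lt
    apply hP.1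
    · simp only [Fin.le_def]; omega
    · left; simp only [Fin.lt_def]; omega

theorem aux_sp {m n : ℕ} [NeZero m] (p q : Fin m) (hgap : (p : ℕ) + 1 < (q : ℕ))
    (P P' : Profile (hybridDomain p q) n) (i : Fin n) (hPP : ∀ j, j ≠ i → P' j = P j)
    (β : Finset (Fin n) → Lottery m) (hmon : BallotMonotone β) (hcrd : ConstrainedRD p q β)
    (k : ℕ) :
    ∑ a ∈ range m, auxU (P i).1 k a *
      ((tailProb β P' a - tailProb β P a) - (tailProb β P' (a + 1) - tailProb β P (a + 1))) ≤ 0 := by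
  obtain ⟨ε, hε0, hε1, hc⟩ := hcrd
  obtain ⟨M, rfl⟩ : ∃ M, m = M + 1 := ⟨m - 1, by have := NeZero.ne m; omega⟩
  have hH : IsHybridPref p q (P i).1 := (P i).2
  set Q : Pref (M + 1) := (P i).1 with hQ
  set d : ℕ → ℝ := fun a => tailProb β P' a - tailProb β P a with hd
  set x : Fin (M + 1) := topOf (P i) with hx
  set y : Fin (M + 1) := topOf (P' i) with hy
  have hQx : Q 0 = x := rfl
  have hxm := x.2
  have hym := y.2
  have hpm := p.2
  have hqm := q.2
  have deq : ∀ a : ℕ, (a ≤ (x : ℕ) ↔ a ≤ (y : ℕ)) → d a = 0 := fun a ha =>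
    sub_eq_zero.2 (aux_tail_eq β P P' i hPP a ha)
  have h0 : d 0 = 0 := deq 0 (by simp)
  have hM : d (M + 1) = 0 := deq _ (by omega)
  rcases le_or_gt x y with hxy | hxy
  · have dup : ∀ a : ℕ, (x : ℕ) < a → a ≤ (y : ℕ) → 0 ≤ d a ∧
        ((p : ℕ) < a → a ≤ (q : ℕ) → d a = ε i) := fun a h1 h2 => by
      have := aux_tail_up β P P' i hPP a h1 h2 hmon p q ε hε1 hc
      exact ⟨sub_nonneg.2 this.1, fun h3 h4 => by simp only [hd]; rw [this.2 h3 h4]; ring⟩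
    have out : ∀ a, a < M → ¬ ((x : ℕ) ≤ a ∧ a < (y : ℕ) ∧ (p : ℕ) ≤ a ∧ a < (q : ℕ)) →
        d (a + 1) * (auxU Q k (a + 1) - auxU Q k a) ≤ 0 := by
      intro a ha hn
      by_cases hin : (x : ℕ) ≤ a ∧ a < (y : ℕ)
      · have := auxU_right p q Q hH k a (by omega) (by rw [hQx]; omega) (by omega)
        exact mul_nonpos_of_nonneg_of_nonpos (dup _ (by omega) (by omega)).1 (by linarith)
      · rw [deq (a + 1) (by omega), zero_mul]
    by_cases hst : max (x : ℕ) (p : ℕ) ≤ min (y : ℕ) (q : ℕ)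
    · apply aux_sum M (auxU Q k) d h0 hM (max x p) (min y q) hst (by omega) (ε i)
      · intro a h1 h2
        exact (dup _ (by omega) (by omega)).2 (by omega) (by omega)
      · intro a ha hn
        exact out a ha (by omega)
      · apply mul_nonpos_of_nonneg_of_nonpos (hε0 i)
        rw [sub_nonpos]
        rcases le_total (x : ℕ) (p : ℕ) with h | h
        · rw [max_eq_right h]
          by_cases hte : min (y : ℕ) (q : ℕ) = p
          · rw [hte]
          · apply auxU_le Q k _ _ hpm (by omega)
            apply le_of_lt
            apply hH.2.1 (by rw [hQx]; exact h)
            · simp only [Fin.le_def]; omega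
            · simp only [Fin.le_def]; omega
            · intro hc; exact hte (congrArg Fin.val hc)
        · rw [max_eq_left h]
          exact auxU_top Q k _ (by omega)
    · apply aux_sum M (auxU Q k) d h0 hM 0 0 le_rfl (by omega) 0
      · intro a h1 h2; omega
      · intro a ha hn
        exact out a ha (by omega)
      · simp
  · rw [Fin.lt_def] at hxy
    have dup : ∀ a : ℕ, (y : ℕ) < a → a ≤ (x : ℕ) → d a ≤ 0 ∧
        ((p : ℕ) < a → a ≤ (q : ℕ) → d a = - ε i) := fun a h1 h2 => by
      have := aux_tail_up β P' P i (fun j hj => (hPP j hj).symm) a h1 h2 hmon p q ε hε1 hc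
      exact ⟨sub_nonpos.2 this.1, fun h3 h4 => by simp only [hd]; rw [this.2 h3 h4]; ring⟩
    have out : ∀ a, a < M → ¬ ((y : ℕ) ≤ a ∧ a < (x : ℕ) ∧ (p : ℕ) ≤ a ∧ a < (q : ℕ)) →
        d (a + 1) * (auxU Q k (a + 1) - auxU Q k a) ≤ 0 := by
      intro a ha hn
      by_cases hin : (y : ℕ) ≤ a ∧ a < (x : ℕ)
      · have := auxU_left p q Q hH k a (by omega) (by rw [hQx]; omega) (by omega)
        exact mul_nonpos_of_nonpos_of_nonneg (dup _ (by omega) (by omega)).1 (by linarith)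
      · rw [deq (a + 1) (by omega), zero_mul]
    by_cases hst : max (y : ℕ) (p : ℕ) ≤ min (x : ℕ) (q : ℕ)
    · apply aux_sum M (auxU Q k) d h0 hM (max y p) (min x q) hst (by omega) (- ε i)
      · intro a h1 h2
        exact (dup _ (by omega) (by omega)).2 (by omega) (by omega)
      · intro a ha hn
        exact out a ha (by omega)
      · apply mul_nonpos_of_nonpos_of_nonneg (neg_nonpos.2 (hε0 i))
        rw [sub_nonneg]
        rcases le_total (q : ℕ) (x : ℕ) with h | h
        · rw [min_eq_right h]
          by_cases hte : max (y : ℕ) (p : ℕ) = q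
          · rw [hte]
          · apply auxU_le Q k _ _ hqm (by omega)
            apply le_of_lt
            apply hH.2.2 (by rw [hQx]; exact h)
            · simp only [Fin.le_def]; omega
            · simp only [Fin.le_def]; omega
            · intro hc; exact hte (congrArg Fin.val hc)
        · rw [min_eq_left h]
          exact auxU_top Q k _ (by omega)
    · apply aux_sum M (auxU Q k) d h0 hM 0 0 le_rfl (by omega) 0
      · intro a h1 h2; omega
      · intro a ha hn
        exact out a ha (by omega)
      · simp

theorem aux_unan_tail {m n : ℕ} [NeZero m] {D : Set (Pref m)}
    (β : Finset (Fin n) → Lottery m) (hβ : BallotUnanimity β) (P : Profile D n) (a : Fin m)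
    (ha : ∀ i, topOf (P i) = a) (k : ℕ) :
    tailProb β P k = if k ≤ (a : ℕ) then 1 else 0 := by
  unfold tailProb
  by_cases hk : k ≤ (a : ℕ)
  · have hkm : k < m := lt_of_le_of_lt hk a.2
    have : voterSet P ⟨k, hkm⟩ = univ := by
      ext j; simp [voterSet, ha, Fin.le_def, hk]
    rw [dif_pos hkm, if_pos hk, this, hβ.1]
    simp only [Lottery.prob, degLottery, upSet, Finset.sum_ite_eq']
    rw [if_pos]
    simp only [Finset.mem_filter, Finset.mem_univ, true_and, Fin.le_def, lastAlt]
    omega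
  · rw [if_neg hk]
    split_ifs with hkm
    · have : voterSet P ⟨k, hkm⟩ = ∅ := by
        ext j
        simp only [voterSet, ha, Fin.le_def, Finset.mem_filter, Finset.mem_univ, true_and,
          Finset.notMem_empty, iff_false]
        exact hk
      rw [this, hβ.2]
      simp only [Lottery.prob, degLottery, upSet, Finset.sum_ite_eq']
      rw [if_neg]
      simp only [Finset.mem_filter, Finset.mem_univ, true_and, Fin.le_def, Fin.val_zero]
      omega
    · rfl

/-- Every `(p,q)`-PFBR on the full `(p,q)`-hybrid domain (`q - p > 1`)
is unanimous and strategy-proof. -/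
theorem pfbr_is_unanimous_and_strategyproof (m n : ℕ) [NeZero m] (hm : 3 ≤ m) (hn : 2 ≤ n)
    (p q : Fin m) (hgap : (p : ℕ) + 1 < (q : ℕ))
    (φ : Profile (hybridDomain p q) n → Lottery m)
    (β : Finset (Fin n) → Lottery m)
    (hβ : IsPFBRWith φ β) (hcrd : ConstrainedRD p q β) :
    Unanimous φ ∧ StrategyProof φ := by
  obtain ⟨hu, hmon, hφ⟩ := hβ
  constructor
  · intro P a ha
    apply Subtype.ext
    funext b
    rw [hφ, aux_unan_tail β hu P a ha, aux_unan_tail β hu P a ha]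
    simp only [degLottery, Fin.ext_iff]
    split_ifs <;> first | omega | norm_num
  · intro i P Pi' k _
    have h := aux_sp p q hgap P (Function.update P i Pi') i
      (fun j hj => Function.update_of_ne hj _ _) β hmon hcrd k
    rw [aux_topSum, aux_topSum, ← sub_nonpos, ← Finset.sum_sub_distrib]
    rw [Finset.sum_range] at h
    refine le_trans (le_of_eq ?_) h
    apply sum_congr rfl
    intro a _
    rw [hφ, hφ]
    ring
end
end
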